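/- Let d ≥ 1, let I be a metric space, let S : I → Matrix d d ℂ be continuous with sup_{i∈I} ‖S_i‖ < ∞ and with generalized spectral radius ρ(S) = 1, and let Λ ⊆ Σ_I^+ be a nonempty compact θ_+-invariant subset. Then the following are equivalent: (a) S is Λ-absolutely asymptotically stable, i.e. S_{i_n}···S_{i_1} → 0 as n → ∞ for every i(·) ∈ Λ; (b) ρ(S|Λ) < 1; (c) there exist a constant γ ∈ (0,1) and an integer N ≥ 1 such that ρ(S_{i_n}···S_{i_1}) ≤ γ for all n ≥ N and all i(·) ∈ Λ. -/

import Mathlib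

open Filter Topology MeasureTheory

/-- Operator norm on `d × d` complex matrices induced by the Euclidean norm on `ℂ^d`. -/
noncomputable def opNorm {d : ℕ} (A : Matrix (Fin d) (Fin d) ℂ) : ℝ :=
  ‖Matrix.toEuclideanCLM (𝕜 := ℂ) A‖

/-- Spectral radius of a complex matrix, as a real number. -/
noncomputable def specRad {d : ℕ} (A : Matrix (Fin d) (Fin d) ℂ) : ℝ :=
  (spectralRadius ℂ A).toReal

/-- `prodS S x n = S_{i_n} ⋯ S_{i_1}` where `i_k = x (k-1)`. -/
noncomputable def prodS {d : ℕ} {I : Type*} (S : I → Matrix (Fin d) (Fin d) ℂ)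
    (x : ℕ → I) : ℕ → Matrix (Fin d) (Fin d) ℂ
  | 0 => 1
  | n + 1 => S (x n) * prodS S x n

/-- `Λ` is invariant under the one-sided shift `θ₊`. -/
def ShiftInv {I : Type*} (Λ : Set (ℕ → I)) : Prop :=
  ∀ x ∈ Λ, (fun n => x (n + 1)) ∈ Λ

/-- Generalized spectral radius of `S` restricted to `Λ`. -/
noncomputable def gsr {d : ℕ} {I : Type*} (S : I → Matrix (Fin d) (Fin d) ℂ)
    (Λ : Set (ℕ → I)) : ℝ :=
  Filter.limsup (fun n : ℕ => ⨆ x : Λ, specRad (prodS S x.1 n) ^ (1 / (n : ℝ))) Filter.atTop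

/-!
By compactness and shift invariance, if the products tend to zero along every signal in `Λ`, they do
so at a uniform exponential rate; this gives (a) ⇒ (b). For (b) ⇒ (c), take `n`-th powers of the
normalized spectral radii.

For (c) ⇒ (a), periodic signals and `ρ(S) = 1` show that every finite product has spectral radius at
most one. If the matrices `S i` have no common invariant subspace, Burnside's theorem makes the
semigroup they generate span the whole matrix algebra, and since its traces are bounded, so is the
semigroup. A trajectory that does not tend to zero then produces a nonzero idempotent `E` as a limit
of products `M` of arbitrarily long subwords; but `‖det (1 - M)‖ ≥ (1 - γ) ^ d` by (c), whereas
`det (1 - E) = 0`. If there is a common invariant subspace, the matrices are simultaneously block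
triangular, induction on the dimension applies to the diagonal blocks, and the off-diagonal block is
a convolution of two exponentially decaying sequences.
-/

section L2OperatorNorm

open scoped Matrix Matrix.Norms.L2Operator

section Irreducibility

variable {K n : Type*} [Field K] [Fintype n] [DecidableEq n]

/-- A set of matrices is irreducible if `⊥` and `⊤` are its only common invariant subspaces,
which is the hypothesis of Burnside's theorem. Any set of matrices of size zero is irreducible. -/
def IsIrreducibleSet (s : Set (Matrix n n K)) : Prop :=
  ∀ p : Submodule K (n → K), (∀ M ∈ s, ∀ v ∈ p, M *ᵥ v ∈ p) → p = ⊥ ∨ p = ⊤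

theorem burnside_subalgebra_eq_top {V : Type*} [IsAlgClosed K] [AddCommGroup V] [Module K V]
    [FiniteDimensional K V] (A : Subalgebra K (Module.End K V)) [IsSimpleModule A V] : A = ⊤ := by
  classical
  refine eq_top_iff.2 fun f _ => ?_
  have scalar_surjective : Function.Surjective (algebraMap K (Module.End A V)) :=
    (IsSimpleModule.algebraMap_end_bijective_of_isAlgClosed K).2
  let F : Module.End (Module.End A V) V :=
    { toFun := f
      map_add' := f.map_add
      map_smul' := fun g v => by
        obtain ⟨c, rfl⟩ := scalar_surjective g
        simp }
  let b := Module.finBasis K V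
  obtain ⟨r, hr⟩ := jacobson_density (R := A) F (Finset.univ.image b)
  have f_eq_r : f = r := b.ext fun i => hr (b i) (Finset.mem_image_of_mem _ (Finset.mem_univ i))
  exact f_eq_r ▸ r.2

theorem IsIrreducibleSet.isSimpleModule_adjoin [Nonempty n] {s : Set (Matrix n n K)}
    (hs : IsIrreducibleSet s) :
    IsSimpleModule (Algebra.adjoin K ((Matrix.toLinAlgEquiv' : Matrix n n K ≃ₐ[K] _) '' s))
      (n → K) := by
  refine (isSimpleModule_iff _ _).2 { eq_bot_or_eq_top := fun p => ?_ }
  refine (hs (p.restrictScalars K) fun M hM v hv => ?_).imp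
    (Submodule.restrictScalars_eq_bot_iff K _ _).1 (Submodule.restrictScalars_eq_top_iff K _ _).1
  exact p.smul_mem ⟨_, Algebra.subset_adjoin (Set.mem_image_of_mem _ hM)⟩ hv

theorem IsIrreducibleSet.adjoin_eq_top [IsAlgClosed K] {s : Set (Matrix n n K)}
    (hs : IsIrreducibleSet s) : Algebra.adjoin K s = ⊤ := by
  cases isEmpty_or_nonempty n
  · exact Subsingleton.elim _ _
  let e : Matrix n n K →ₐ[K] Module.End K (n → K) := Matrix.toLinAlgEquiv'.toAlgHom
  have : IsSimpleModule (Algebra.adjoin K (e '' s)) (n → K) := hs.isSimpleModule_adjoin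
  have map_adjoin : (Algebra.adjoin K s).map e = ⊤ :=
    (AlgHom.map_adjoin e s).trans (burnside_subalgebra_eq_top _)
  refine Subalgebra.map_injective (f := e) Matrix.toLinAlgEquiv'.injective ?_
  rw [map_adjoin, Algebra.map_top, (AlgHom.range_eq_top e).2 Matrix.toLinAlgEquiv'.surjective]

theorem IsIrreducibleSet.span_closure_eq_top [IsAlgClosed K] {s : Set (Matrix n n K)}
    (hs : IsIrreducibleSet s) :
    Submodule.span K (Submonoid.closure s : Set (Matrix n n K)) = ⊤ := by
  rw [← Algebra.adjoin_eq_span, hs.adjoin_eq_top, Algebra.top_toSubmodule]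

end Irreducibility

section BoundedTraces

variable {𝕜 n : Type*} [RCLike 𝕜] [Fintype n] [DecidableEq n] {G : Submonoid (Matrix n n 𝕜)}
  {c : ℝ}

theorem exists_norm_trace_mul_le (hspan : Submodule.span 𝕜 (G : Set (Matrix n n 𝕜)) = ⊤)
    (htrace : ∀ M ∈ G, ‖M.trace‖ ≤ c) (W : Matrix n n 𝕜) :
    ∃ b : ℝ, ∀ M ∈ G, ‖(W * M).trace‖ ≤ b := by
  have hW : W ∈ Submodule.span 𝕜 (G : Set (Matrix n n 𝕜)) := hspan ▸ Submodule.mem_top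
  induction hW using Submodule.span_induction with
  | mem W hW => exact ⟨c, fun M hM => htrace _ (mul_mem hW hM)⟩
  | zero => exact ⟨0, by simp⟩
  | add X Y _ _ hX hY =>
    obtain ⟨bX, hX⟩ := hX
    obtain ⟨bY, hY⟩ := hY
    refine ⟨bX + bY, fun M hM => ?_⟩
    rw [add_mul, Matrix.trace_add]
    exact norm_add_le_of_le (hX M hM) (hY M hM)
  | smul a X _ hX =>
    obtain ⟨bX, hX⟩ := hX
    refine ⟨‖a‖ * bX, fun M hM => ?_⟩
    rw [smul_mul_assoc, Matrix.trace_smul, norm_smul]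
    exact mul_le_mul_of_nonneg_left (hX M hM) (norm_nonneg a)

theorem exists_norm_le_of_norm_trace_le
    (hspan : Submodule.span 𝕜 (G : Set (Matrix n n 𝕜)) = ⊤)
    (htrace : ∀ M ∈ G, ‖M.trace‖ ≤ c) : ∃ b : ℝ, ∀ M ∈ G, ‖M‖ ≤ b := by
  choose b hb using exists_norm_trace_mul_le hspan htrace
  have norm_entry_le : ∀ M ∈ G, ∀ i j, ‖M i j‖ ≤ b (Matrix.single j i 1) := fun M hM i j => by
    simpa only [Matrix.trace_single_mul, one_smul, one_mul] using hb (Matrix.single j i 1) M hM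
  refine ⟨∑ i, ∑ j, b (Matrix.single j i 1) * ‖(Matrix.single i j 1 : Matrix n n 𝕜)‖,
    fun M hM => ?_⟩
  calc ‖M‖ = ‖∑ i, ∑ j, M i j • (Matrix.single i j 1 : Matrix n n 𝕜)‖ := by
        conv_lhs => rw [Matrix.matrix_eq_sum_single M]
        simp only [Matrix.smul_single, smul_eq_mul, mul_one]
    _ ≤ ∑ i, ∑ j, b (Matrix.single j i 1) * ‖(Matrix.single i j 1 : Matrix n n 𝕜)‖ := by
        refine norm_sum_le_of_le _ fun i _ => norm_sum_le_of_le _ fun j _ => ?_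
        rw [norm_smul]
        exact mul_le_mul_of_nonneg_right (norm_entry_le M hM i j) (norm_nonneg _)

end BoundedTraces

section Spectrum

variable {K n : Type*} [Fintype n] [DecidableEq n]

theorem card_roots_charpoly [Field K] [IsAlgClosed K] (M : Matrix n n K) :
    M.charpoly.roots.card = Fintype.card n := by
  rw [← (IsAlgClosed.splits M.charpoly).natDegree_eq_card_roots, M.charpoly_natDegree_eq_dim]

theorem norm_trace_le_of_spectrum [NormedField K] [IsAlgClosed K] {M : Matrix n n K} {r : ℝ}
    (h : ∀ z ∈ spectrum K M, ‖z‖ ≤ r) : ‖M.trace‖ ≤ Fintype.card n * r := by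
  rw [Matrix.trace_eq_sum_roots_charpoly, ← nsmul_eq_mul, ← card_roots_charpoly M,
    ← Multiset.card_map norm]
  refine (norm_multiset_sum_le _).trans (Multiset.sum_le_card_nsmul _ _ ?_)
  simp only [Multiset.mem_map, forall_exists_index, and_imp, forall_apply_eq_imp_iff₂]
  exact fun z hz => h z (Matrix.mem_spectrum_of_isRoot_charpoly (Polynomial.isRoot_of_mem_roots hz))

theorem pow_card_le_norm_det_one_sub [NormedField K] [IsAlgClosed K] {M : Matrix n n K} {r : ℝ}
    (hr : r ≤ 1) (h : ∀ z ∈ spectrum K M, ‖z‖ ≤ r) :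
    (1 - r) ^ Fintype.card n ≤ ‖(1 - M).det‖ := by
  have det_eq : (1 - M).det = (M.charpoly.roots.map (1 - ·)).prod := by
    rw [← (IsAlgClosed.splits M.charpoly).eval_eq_prod_roots_of_monic M.charpoly_monic,
      Matrix.eval_charpoly, map_one]
  have le_norm_one_sub : ∀ z ∈ M.charpoly.roots, 1 - r ≤ ‖1 - z‖ := fun z hz => by
    have := h z (Matrix.mem_spectrum_of_isRoot_charpoly (Polynomial.isRoot_of_mem_roots hz))
    linarith [norm_sub_norm_le 1 z, norm_one (α := K)]
  calc (1 - r) ^ Fintype.card n = (M.charpoly.roots.map fun _ => 1 - r).prod := by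
        rw [Multiset.map_const', Multiset.prod_replicate, card_roots_charpoly]
    _ ≤ (M.charpoly.roots.map fun z => ‖1 - z‖).prod :=
        Multiset.prod_map_le_prod_map₀ _ _ (fun _ _ => sub_nonneg.2 hr) le_norm_one_sub
    _ = ‖(1 - M).det‖ := by
        rw [det_eq]
        exact ((map_multiset_prod (normHom (α := K)) _).trans
          (congrArg _ (Multiset.map_map _ _ _))).symm

theorem spectrum_fromBlocks_zero₂₁ {p q : Type*} [Field K] [Fintype p] [DecidableEq p] [Fintype q]
    [DecidableEq q] (A : Matrix p p K) (B : Matrix p q K) (D : Matrix q q K) :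
    spectrum K (Matrix.fromBlocks A B 0 D) = spectrum K A ∪ spectrum K D := by
  ext z
  simp only [Set.mem_union, Matrix.mem_spectrum_iff_isRoot_charpoly,
    Matrix.charpoly_fromBlocks_zero₂₁, Polynomial.root_mul]

theorem not_isUnit_one_sub_of_isIdempotentElem {R : Type*} [Ring R] {E : R}
    (hE : IsIdempotentElem E) (hE₀ : E ≠ 0) : ¬IsUnit (1 - E) := fun h =>
  hE₀ (h.mul_right_eq_zero.1 hE.one_sub_mul_self)

end Spectrum

section InvariantSubspace

theorem exists_algEquiv_toBlocks₂₁_eq_zero {K n : Type*} [Field K] [Fintype n] [DecidableEq n]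
    {p : Submodule K (n → K)} (hbot : p ≠ ⊥) (htop : p ≠ ⊤) :
    ∃ a < Fintype.card n, ∃ b < Fintype.card n,
      ∃ e : Matrix n n K ≃ₐ[K] Matrix (Fin a ⊕ Fin b) (Fin a ⊕ Fin b) K,
        ∀ M, (∀ v ∈ p, M *ᵥ v ∈ p) → (e M).toBlocks₂₁ = 0 := by
  obtain ⟨q, hpq⟩ := p.exists_isCompl
  have hq : q ≠ ⊤ := fun hq => hbot (eq_bot_of_isCompl_top (hq ▸ hpq))
  have finrank_lt_card {r : Submodule K (n → K)} (hr : r ≠ ⊤) :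
      Module.finrank K r < Fintype.card n :=
    Module.finrank_fintype_fun_eq_card K (η := n) ▸ Submodule.finrank_lt hr
  let bp := Module.finBasis K p
  let b := (bp.prod (Module.finBasis K q)).map (p.prodEquivOfIsCompl q hpq)
  refine ⟨_, finrank_lt_card htop, _, finrank_lt_card hq,
    Matrix.toLinAlgEquiv'.trans (LinearMap.toMatrixAlgEquiv b), fun M hM => ?_⟩
  ext k j
  have projection_eq_zero : q.projectionOnto p hpq.symm (M *ᵥ (bp j : n → K)) = 0 :=
    (Submodule.projectionOnto_apply_eq_zero_iff hpq.symm).2 (hM _ (bp j).2)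
  simp [bp, b, Matrix.toBlocks₂₁, LinearMap.toMatrixAlgEquiv_apply, projection_eq_zero]

end InvariantSubspace

section Cocycle

theorem exists_tendsto_of_norm_le {ι E : Type*} [SeminormedAddCommGroup E] [ProperSpace E]
    (U : Ultrafilter ι) {f : ι → E} {c : ℝ} (hf : ∀ i, ‖f i‖ ≤ c) :
    ∃ a, ‖a‖ ≤ c ∧ Tendsto f U (𝓝 a) := by
  obtain ⟨a, ha, hlim⟩ := (isCompact_closedBall (0 : E) c).ultrafilter_le_nhds (U.map f)
    (le_principal_iff.2 (mem_map.2 (univ_mem' fun i => mem_closedBall_zero_iff.2 (hf i))))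
  exact ⟨a, mem_closedBall_zero_iff.1 ha, hlim⟩

/- Along an ultrafilter where `P 0` does not tend to zero, let `Q i = lim_k P i k` and
`E = lim_j Q j`. Passing to the limit in the cocycle identity, first in `k` and then in `j`, gives
`Q i = E * Q i`, and a last limit in `i` gives `E = E * E`. -/
theorem exists_isIdempotentElem_mem_closure {R : Type*} [NormedRing R] [ProperSpace R]
    {P : ℕ → ℕ → R} {c : ℝ} (hbound : ∀ i j, ‖P i j‖ ≤ c)
    (hmul : ∀ i j k, i ≤ j → j ≤ k → P j k * P i j = P i k)
    (hlim : ¬Tendsto (P 0) atTop (𝓝 0)) (N : ℕ) :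
    ∃ E ∈ closure {M | ∃ i j, i + N ≤ j ∧ P i j = M}, IsIdempotentElem E ∧ E ≠ 0 := by
  rw [tendsto_iff_ultrafilter] at hlim
  push Not at hlim
  obtain ⟨U, hU, hU₀⟩ := hlim
  choose Q hQ_le hQ using fun i => exists_tendsto_of_norm_le U (hbound i)
  obtain ⟨E, -, hE⟩ := exists_tendsto_of_norm_le U hQ_le
  have ge_of_large (i : ℕ) : ∀ᶠ k in (U : Filter ℕ), i ≤ k := hU (eventually_ge_atTop i)
  have Q_mul_P {i j : ℕ} (hij : i ≤ j) : Q j * P i j = Q i :=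
    tendsto_nhds_unique ((hQ j).mul_const (P i j)) <|
      (hQ i).congr' <| (ge_of_large j).mono fun k hjk => (hmul i j k hij hjk).symm
  have E_mul_Q (i : ℕ) : E * Q i = Q i :=
    tendsto_nhds_unique (hE.mul (hQ i)) <|
      tendsto_const_nhds.congr' <| (ge_of_large i).mono fun j hij => (Q_mul_P hij).symm
  have Q_mem (i : ℕ) : Q i ∈ closure {M | ∃ i j, i + N ≤ j ∧ P i j = M} :=
    mem_closure_of_tendsto (hQ i) <| (ge_of_large (i + N)).mono fun k hk => ⟨i, k, hk, rfl⟩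
  refine ⟨E, isClosed_closure.mem_of_tendsto hE (.of_forall Q_mem), ?_, ?_⟩
  · exact tendsto_nhds_unique (hE.const_mul E) (hE.congr fun i => (E_mul_Q i).symm)
  · rintro rfl
    have Q_zero : Q 0 = 0 := by rw [← E_mul_Q 0, zero_mul]
    exact hU₀ (Q_zero ▸ hQ 0)

end Cocycle

section SwitchedProduct

/-- The product `S (x (n - 1)) * ⋯ * S (x 0)` of the first `n` factors along the signal `x`. It is
`prodS` for factors in an arbitrary monoid, so that it also applies to block matrices. -/
def switchedProd {M I : Type*} [Monoid M] (S : I → M) (x : ℕ → I) : ℕ → M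
  | 0 => 1
  | n + 1 => S (x n) * switchedProd S x n

theorem prodS_eq_switchedProd {d : ℕ} {I : Type*} (S : I → Matrix (Fin d) (Fin d) ℂ) (x : ℕ → I) :
    prodS S x = switchedProd S x := by
  funext n
  induction n with
  | zero => rfl
  | succ n ih => rw [prodS, switchedProd, ih]

variable {M I : Type*} [Monoid M] (S : I → M) (x : ℕ → I)

theorem switchedProd_add (m n : ℕ) :
    switchedProd S x (m + n) = switchedProd S (fun k => x (k + m)) n * switchedProd S x m := by
  induction n with
  | zero => rw [add_zero, switchedProd, one_mul]
  | succ n ih => rw [← add_assoc, switchedProd, ih, switchedProd, mul_assoc, add_comm m n]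

theorem switchedProd_congr {x y : ℕ → I} {n : ℕ} (h : ∀ k < n, x k = y k) :
    switchedProd S x n = switchedProd S y n := by
  induction n with
  | zero => rfl
  | succ n ih =>
    rw [switchedProd, switchedProd, h n n.lt_succ_self,
      ih fun k hk => h k (hk.trans n.lt_succ_self)]

theorem map_switchedProd {M' : Type*} [Monoid M'] (f : M →* M') (n : ℕ) :
    f (switchedProd S x n) = switchedProd (fun i => f (S i)) x n := by
  induction n with
  | zero => exact map_one f
  | succ n ih => rw [switchedProd, switchedProd, map_mul, ih]

theorem switchedProd_mod_mul (m k : ℕ) :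
    switchedProd S (fun j => x (j % m)) (m * k) = switchedProd S x m ^ k := by
  induction k with
  | zero => rw [mul_zero, pow_zero, switchedProd]
  | succ k ih =>
    rw [mul_add_one, switchedProd_add, ih, pow_succ']
    congr 1
    exact switchedProd_congr S fun j hj => by rw [Nat.add_mul_mod_self_left, Nat.mod_eq_of_lt hj]

theorem switchedProd_mem_closure (n : ℕ) :
    switchedProd S x n ∈ Submonoid.closure (Set.range S) := by
  induction n with
  | zero => exact one_mem _
  | succ n ih => exact mul_mem (Submonoid.subset_closure (Set.mem_range_self _)) ih

theorem exists_switchedProd_eq_of_mem_closure [Nonempty I] {a : M}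
    (ha : a ∈ Submonoid.closure (Set.range S)) : ∃ x n, switchedProd S x n = a := by
  induction ha using Submonoid.closure_induction_left with
  | one => exact ⟨fun _ => Classical.arbitrary I, 0, rfl⟩
  | mul_left _ hs _ _ ih =>
    obtain ⟨i, rfl⟩ := hs
    obtain ⟨x, n, rfl⟩ := ih
    refine ⟨Function.update x n i, n + 1, ?_⟩
    rw [switchedProd, Function.update_self]
    congr 1
    exact switchedProd_congr S fun k hk => Function.update_of_ne hk.ne i x

theorem continuous_switchedProd [TopologicalSpace M] [ContinuousMul M] [TopologicalSpace I]
    {S : I → M} (hS : Continuous S) (n : ℕ) : Continuous fun x : ℕ → I => switchedProd S x n := by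
  induction n with
  | zero => exact continuous_const
  | succ n ih => exact (hS.comp (continuous_apply n)).mul ih

theorem ShiftInv.add_mem {Λ : Set (ℕ → I)} (hinv : ShiftInv Λ) {x : ℕ → I} (hx : x ∈ Λ) (m : ℕ) :
    (fun k => x (k + m)) ∈ Λ := by
  induction m with
  | zero => exact hx
  | succ m ih => simpa only [add_assoc, add_comm m 1] using hinv _ ih

theorem ShiftInv.exists_norm_apply_le {E : Type*} [SeminormedAddCommGroup E] [TopologicalSpace I]
    {f : I → E} (hf : Continuous f) {Λ : Set (ℕ → I)} (hinv : ShiftInv Λ) (hΛ : IsCompact Λ) :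
    ∃ C : ℝ, ∀ x ∈ Λ, ∀ k, ‖f (x k)‖ ≤ C := by
  obtain ⟨C, hC⟩ := hΛ.exists_bound_of_continuousOn (hf.comp (continuous_apply 0)).continuousOn
  exact ⟨C, fun x hx k => by
    simpa only [Function.comp_apply, zero_add] using hC _ (hinv.add_mem hx k)⟩

end SwitchedProduct

section ExponentialDecay

variable {R I : Type*} [NormedRing R] {S : I → R} {Λ : Set (ℕ → I)}

theorem norm_switchedProd_le_pow {C : ℝ} {x : ℕ → I} (hone : ‖(1 : R)‖ ≤ 1)
    (hC : ∀ k, ‖S (x k)‖ ≤ C) (n : ℕ) : ‖switchedProd S x n‖ ≤ C ^ n := by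
  induction n with
  | zero => exact hone.trans_eq (pow_zero C).symm
  | succ n ih =>
    rw [switchedProd, pow_succ']
    exact norm_mul_le_of_le (hC n) ih

theorem norm_switchedProd_le_geometric (hinv : ShiftInv Λ) {B r : ℝ} {N : ℕ}
    (hB : ∀ x ∈ Λ, ∀ m ≤ N, ‖switchedProd S x m‖ ≤ B * r ^ m)
    (hr : ∀ x ∈ Λ, ∃ m, 0 < m ∧ m ≤ N ∧ ‖switchedProd S x m‖ ≤ r ^ m) :
    ∀ x ∈ Λ, ∀ m, ‖switchedProd S x m‖ ≤ B * r ^ m := by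
  intro x hx m
  induction m using Nat.strong_induction_on generalizing x with
  | _ m ih =>
    rcases le_total m N with hmN | hNm
    · exact hB x hx m hmN
    obtain ⟨k, hk₀, hkN, hk⟩ := hr x hx
    obtain ⟨l, rfl⟩ := Nat.exists_eq_add_of_le (hkN.trans hNm)
    calc ‖switchedProd S x (k + l)‖
        = ‖switchedProd S (fun j => x (j + k)) l * switchedProd S x k‖ := by rw [switchedProd_add]
      _ ≤ B * r ^ l * r ^ k := norm_mul_le_of_le (ih l (by omega) _ (hinv.add_mem hx k)) hk
      _ = B * r ^ (k + l) := by ring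

variable [TopologicalSpace I]

theorem exists_forall_norm_switchedProd_lt (hS : Continuous S) (hΛ : IsCompact Λ)
    (hlim : ∀ x ∈ Λ, Tendsto (switchedProd S x) atTop (𝓝 0)) {ε : ℝ} (hε : 0 < ε) :
    ∃ N, ∀ x ∈ Λ, ∃ m, 0 < m ∧ m ≤ N ∧ ‖switchedProd S x m‖ < ε := by
  refine hΛ.elim_directed_cover
    (fun N => {x | ∃ m, 0 < m ∧ m ≤ N ∧ ‖switchedProd S x m‖ < ε}) (fun N => ?_) (fun x hx => ?_) ?_
  · simp only [Set.ofPred_exists, Set.ofPred_and]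
    exact isOpen_iUnion fun m => isOpen_const.inter <| isOpen_const.inter <|
      isOpen_lt (continuous_switchedProd hS m).norm continuous_const
  · have hnorm := tendsto_zero_iff_norm_tendsto_zero.1 (hlim x hx)
    obtain ⟨m, hm, hm₀⟩ := ((hnorm.eventually_lt_const hε).and (eventually_gt_atTop 0)).exists
    exact Set.mem_iUnion.2 ⟨m, m, hm₀, le_rfl, hm⟩
  · refine Monotone.directed_le fun N N' hN x => ?_
    rintro ⟨m, hm₀, hmN, hm⟩
    exact ⟨m, hm₀, hmN.trans hN, hm⟩

theorem exists_norm_switchedProd_le_geometric (hS : Continuous S) (hΛ : IsCompact Λ)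
    (hinv : ShiftInv Λ) (hlim : ∀ x ∈ Λ, Tendsto (switchedProd S x) atTop (𝓝 0)) :
    ∃ B r : ℝ, 0 < B ∧ 0 < r ∧ r < 1 ∧ ∀ x ∈ Λ, ∀ m, ‖switchedProd S x m‖ ≤ B * r ^ m := by
  obtain ⟨N, hN⟩ := exists_forall_norm_switchedProd_lt hS hΛ hlim one_half_pos
  obtain ⟨r, hrN, hr₀, hr₁⟩ : ∃ r : ℝ, 1 / 2 < r ^ N ∧ 0 < r ∧ r < 1 := by
    have hpow : Tendsto (fun r : ℝ => r ^ N) (𝓝[<] 1) (𝓝 1) :=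
      ((continuous_pow N).tendsto' 1 1 (one_pow N)).mono_left nhdsWithin_le_nhds
    exact ((hpow.eventually_const_lt one_half_lt_one).and (Ioo_mem_nhdsLT zero_lt_one)).exists
  have half_le_pow {m : ℕ} (hm : m ≤ N) : 1 / 2 ≤ r ^ m :=
    hrN.le.trans (pow_le_pow_of_le_one hr₀.le hr₁.le hm)
  obtain ⟨b, hb⟩ := hΛ.exists_bound_of_continuousOn
    (f := fun x (m : Fin (N + 1)) => switchedProd S x m)
    (continuous_pi fun m : Fin (N + 1) => continuous_switchedProd hS m).continuousOn
  refine ⟨2 * max b 1, r, by positivity, hr₀, hr₁,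
    norm_switchedProd_le_geometric hinv (N := N) ?_ ?_⟩
  · intro x hx m hm
    calc ‖switchedProd S x m‖ ≤ b :=
          (norm_le_pi_norm (fun m : Fin (N + 1) => switchedProd S x m)
            ⟨m, Nat.lt_succ_of_le hm⟩).trans (hb x hx)
      _ ≤ max b 1 := le_max_left b 1
      _ = 2 * max b 1 * (1 / 2) := by ring
      _ ≤ 2 * max b 1 * r ^ m := mul_le_mul_of_nonneg_left (half_le_pow hm) (by positivity)
  · intro x hx
    obtain ⟨m, hm₀, hmN, hm⟩ := hN x hx
    exact ⟨m, hm₀, hmN, hm.le.trans (half_le_pow hmN)⟩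

end ExponentialDecay

section BlockTriangular

theorem tendsto_sum_range_of_norm_le_geometric {E : Type*} [SeminormedAddCommGroup E]
    {F : ℕ → ℕ → E} {c t : ℝ} (ht₀ : 0 ≤ t) (ht₁ : t < 1) (hF : ∀ n, ∀ k < n, ‖F n k‖ ≤ c * t ^ n) :
    Tendsto (fun n => ∑ k ∈ Finset.range n, F n k) atTop (𝓝 0) := by
  have hgeom : Tendsto (fun n : ℕ => c * (n * t ^ n)) atTop (𝓝 0) := by
    simpa only [mul_zero] using (tendsto_self_mul_const_pow_of_lt_one ht₀ ht₁).const_mul c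
  refine squeeze_zero_norm (fun n => ?_) hgeom
  calc ‖∑ k ∈ Finset.range n, F n k‖ ≤ ∑ _k ∈ Finset.range n, c * t ^ n :=
        norm_sum_le_of_le _ fun k hk => hF n k (Finset.mem_range.1 hk)
    _ = c * (n * t ^ n) := by
        rw [Finset.sum_const, Finset.card_range, nsmul_eq_mul, mul_left_comm]

variable {I p q : Type*} [Fintype p] [DecidableEq p] [Fintype q] [DecidableEq q]

theorem switchedProd_fromBlocks_zero₂₁ {K : Type*} [CommRing K] (A : I → Matrix p p K)
    (B : I → Matrix p q K) (D : I → Matrix q q K) (x : ℕ → I) (n : ℕ) :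
    switchedProd (fun i => Matrix.fromBlocks (A i) (B i) 0 (D i)) x n =
      Matrix.fromBlocks (switchedProd A x n)
        (∑ k ∈ Finset.range n, switchedProd A (fun j => x (j + (k + 1))) (n - 1 - k) * B (x k) *
          switchedProd D x k)
        0 (switchedProd D x n) := by
  induction n with
  | zero => simp only [switchedProd, Finset.range_zero, Finset.sum_empty, Matrix.fromBlocks_one]
  | succ n ih =>
    rw [switchedProd, ih, Matrix.fromBlocks_multiply]
    simp only [Matrix.mul_zero, Matrix.zero_mul, add_zero, zero_add]
    congr 1
    rw [Finset.sum_range_succ, Matrix.mul_sum, Nat.add_sub_cancel, Nat.sub_self, switchedProd,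
      Matrix.one_mul]
    congr 1
    refine Finset.sum_congr rfl fun k hk => ?_
    have hkn : k < n := Finset.mem_range.1 hk
    rw [show n - k = n - 1 - k + 1 by omega, switchedProd, show n - 1 - k + (k + 1) = n by omega]
    simp only [Matrix.mul_assoc]

variable {𝕜 : Type*} [RCLike 𝕜] {Λ : Set (ℕ → I)} {A : I → Matrix p p 𝕜}
  {B : I → Matrix p q 𝕜} {D : I → Matrix q q 𝕜}

theorem norm_switchedProd_mul_mul_switchedProd_le {a b d t : ℝ} (ht : 0 < t) (hinv : ShiftInv Λ)
    (hA : ∀ x ∈ Λ, ∀ m, ‖switchedProd A x m‖ ≤ a * t ^ m) (hB : ∀ x ∈ Λ, ∀ k, ‖B (x k)‖ ≤ b)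
    (hD : ∀ x ∈ Λ, ∀ m, ‖switchedProd D x m‖ ≤ d * t ^ m) {x : ℕ → I} (hx : x ∈ Λ) {n k : ℕ}
    (hk : k < n) :
    ‖switchedProd A (fun j => x (j + (k + 1))) (n - 1 - k) * B (x k) * switchedProd D x k‖ ≤
      a * b * d / t * t ^ n := by
  have pow_split : t ^ n = t ^ (n - 1 - k) * t ^ k * t := by
    rw [← pow_add, ← pow_succ, show n - 1 - k + k + 1 = n by omega]
  have hAk := hA _ (hinv.add_mem hx (k + 1)) (n - 1 - k)
  have hAB := (Matrix.l2_opNorm_mul _ _).trans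
    (mul_le_mul hAk (hB x hx k) (norm_nonneg _) ((norm_nonneg _).trans hAk))
  calc _ ≤ _ := Matrix.l2_opNorm_mul _ _
    _ ≤ a * t ^ (n - 1 - k) * b * (d * t ^ k) :=
        mul_le_mul hAB (hD x hx k) (norm_nonneg _) ((norm_nonneg _).trans hAB)
    _ = a * b * d / t * t ^ n := by rw [pow_split]; field_simp

variable [TopologicalSpace I]

theorem tendsto_sum_switchedProd_mul_mul_switchedProd (hA : Continuous A) (hB : Continuous B)
    (hD : Continuous D) (hΛ : IsCompact Λ) (hinv : ShiftInv Λ)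
    (hlimA : ∀ x ∈ Λ, Tendsto (switchedProd A x) atTop (𝓝 0))
    (hlimD : ∀ x ∈ Λ, Tendsto (switchedProd D x) atTop (𝓝 0)) {x : ℕ → I} (hx : x ∈ Λ) :
    Tendsto (fun n => ∑ k ∈ Finset.range n,
      switchedProd A (fun j => x (j + (k + 1))) (n - 1 - k) * B (x k) * switchedProd D x k)
      atTop (𝓝 0) := by
  obtain ⟨a, r, ha, hr₀, hr₁, hAle⟩ := exists_norm_switchedProd_le_geometric hA hΛ hinv hlimA
  obtain ⟨d, s, hd, hs₀, hs₁, hDle⟩ := exists_norm_switchedProd_le_geometric hD hΛ hinv hlimD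
  obtain ⟨b, hb⟩ := hinv.exists_norm_apply_le hB hΛ
  have ht₀ : 0 < max r s := lt_max_of_lt_left hr₀
  have hA' : ∀ y ∈ Λ, ∀ m, ‖switchedProd A y m‖ ≤ a * max r s ^ m := fun y hy m =>
    (hAle y hy m).trans (by gcongr; exact le_max_left r s)
  have hD' : ∀ y ∈ Λ, ∀ m, ‖switchedProd D y m‖ ≤ d * max r s ^ m := fun y hy m =>
    (hDle y hy m).trans (by gcongr; exact le_max_right r s)
  exact tendsto_sum_range_of_norm_le_geometric ht₀.le (max_lt hr₁ hs₁) fun n k hk =>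
    norm_switchedProd_mul_mul_switchedProd_le ht₀ hinv hA' hb hD' hx hk

theorem tendsto_switchedProd_fromBlocks_zero₂₁ (hA : Continuous A) (hB : Continuous B)
    (hD : Continuous D) (hΛ : IsCompact Λ) (hinv : ShiftInv Λ)
    (hlimA : ∀ x ∈ Λ, Tendsto (switchedProd A x) atTop (𝓝 0))
    (hlimD : ∀ x ∈ Λ, Tendsto (switchedProd D x) atTop (𝓝 0)) {x : ℕ → I} (hx : x ∈ Λ) :
    Tendsto (switchedProd (fun i => Matrix.fromBlocks (A i) (B i) 0 (D i)) x) atTop (𝓝 0) := by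
  have hcont : Continuous fun M : Matrix p p 𝕜 × Matrix p q 𝕜 × Matrix q q 𝕜 =>
      Matrix.fromBlocks M.1 M.2.1 0 M.2.2 := by fun_prop
  have hlim := (hcont.tendsto' 0 0 Matrix.fromBlocks_zero).comp <| (hlimA x hx).prodMk_nhds <|
    (tendsto_sum_switchedProd_mul_mul_switchedProd hA hB hD hΛ hinv hlimA hlimD hx).prodMk_nhds
      (hlimD x hx)
  exact hlim.congr fun n => (switchedProd_fromBlocks_zero₂₁ A B D x n).symm

end BlockTriangular

section BlockTriangularization

variable {I n p q : Type*} [Fintype n] [DecidableEq n] [Fintype p] [DecidableEq p] [Fintype q]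
  [DecidableEq q]

theorem map_switchedProd_of_toBlocks₂₁_eq_zero {K : Type*} [CommRing K]
    (e : Matrix n n K ≃ₐ[K] Matrix (p ⊕ q) (p ⊕ q) K) {S : I → Matrix n n K}
    (he : ∀ i, (e (S i)).toBlocks₂₁ = 0) (x : ℕ → I) (m : ℕ) :
    e (switchedProd S x m) = switchedProd (fun i => Matrix.fromBlocks (e (S i)).toBlocks₁₁
      (e (S i)).toBlocks₁₂ 0 (e (S i)).toBlocks₂₂) x m := by
  have hblocks (i : I) : Matrix.fromBlocks (e (S i)).toBlocks₁₁ (e (S i)).toBlocks₁₂ 0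
      (e (S i)).toBlocks₂₂ = e (S i) := by rw [← he i, Matrix.fromBlocks_toBlocks]
  simp only [hblocks]
  exact map_switchedProd S x (e : Matrix n n K →* Matrix (p ⊕ q) (p ⊕ q) K) m

theorem spectrum_switchedProd_of_toBlocks₂₁_eq_zero {K : Type*} [Field K]
    (e : Matrix n n K ≃ₐ[K] Matrix (p ⊕ q) (p ⊕ q) K) {S : I → Matrix n n K}
    (he : ∀ i, (e (S i)).toBlocks₂₁ = 0) (x : ℕ → I) (m : ℕ) :
    spectrum K (switchedProd S x m) =
      spectrum K (switchedProd (fun i => (e (S i)).toBlocks₁₁) x m) ∪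
        spectrum K (switchedProd (fun i => (e (S i)).toBlocks₂₂) x m) := by
  rw [← AlgEquiv.spectrum_eq e, map_switchedProd_of_toBlocks₂₁_eq_zero e he,
    switchedProd_fromBlocks_zero₂₁, spectrum_fromBlocks_zero₂₁]

theorem tendsto_switchedProd_of_toBlocks₂₁_eq_zero {𝕜 : Type*} [RCLike 𝕜] [TopologicalSpace I]
    {Λ : Set (ℕ → I)} (hΛ : IsCompact Λ) (hinv : ShiftInv Λ)
    (e : Matrix n n 𝕜 ≃ₐ[𝕜] Matrix (p ⊕ q) (p ⊕ q) 𝕜) {S : I → Matrix n n 𝕜}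
    (hS : Continuous fun i => e (S i)) (he : ∀ i, (e (S i)).toBlocks₂₁ = 0)
    (hlim₁₁ : ∀ x ∈ Λ, Tendsto (switchedProd (fun i => (e (S i)).toBlocks₁₁) x) atTop (𝓝 0))
    (hlim₂₂ : ∀ x ∈ Λ, Tendsto (switchedProd (fun i => (e (S i)).toBlocks₂₂) x) atTop (𝓝 0)) :
    ∀ x ∈ Λ, Tendsto (switchedProd S x) atTop (𝓝 0) := by
  intro x hx
  have hlim := tendsto_switchedProd_fromBlocks_zero₂₁ (A := fun i => (e (S i)).toBlocks₁₁)
    (B := fun i => (e (S i)).toBlocks₁₂) (D := fun i => (e (S i)).toBlocks₂₂)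
    (hS.matrix_submatrix _ _) (hS.matrix_submatrix _ _) (hS.matrix_submatrix _ _) hΛ hinv hlim₁₁
    hlim₂₂ hx
  have hsymm : Continuous e.symm := LinearMap.continuous_of_finiteDimensional e.symm.toLinearMap
  refine ((hsymm.tendsto' 0 0 (map_zero e.symm)).comp hlim).congr fun m => ?_
  rw [Function.comp_apply, ← map_switchedProd_of_toBlocks₂₁_eq_zero e he, e.symm_apply_apply]

end BlockTriangularization

section SpectralCriterion

variable {I : Type*} {γ : ℝ} {N : ℕ}

theorem tendsto_switchedProd_of_norm_le {n : Type*} [Fintype n] [DecidableEq n]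
    {S : I → Matrix n n ℂ} {x : ℕ → I} {c : ℝ}
    (hbound : ∀ i m, ‖switchedProd S (fun k => x (k + i)) m‖ ≤ c) (hγ : γ < 1)
    (hspec : ∀ i, ∀ m ≥ N, ∀ z ∈ spectrum ℂ (switchedProd S (fun k => x (k + i)) m), ‖z‖ ≤ γ) :
    Tendsto (switchedProd S x) atTop (𝓝 0) := by
  by_contra hlim
  let P : ℕ → ℕ → Matrix n n ℂ := fun i j => switchedProd S (fun k => x (k + i)) (j - i)
  have hmul (i j k : ℕ) (hij : i ≤ j) (hjk : j ≤ k) : P j k * P i j = P i k := by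
    have hadd := switchedProd_add S (fun k => x (k + i)) (j - i) (k - j)
    simpa only [add_assoc, Nat.sub_add_cancel hij, add_comm (j - i), Nat.sub_add_sub_cancel hjk hij]
      using hadd.symm
  obtain ⟨E, hE, hidem, hE₀⟩ :=
    exists_isIdempotentElem_mem_closure (fun i j => hbound i (j - i)) hmul hlim N
  have hclosed : IsClosed {M : Matrix n n ℂ | (1 - γ) ^ Fintype.card n ≤ ‖(1 - M).det‖} :=
    isClosed_le continuous_const (continuous_const.sub continuous_id).matrix_det.norm
  have le_norm_det : (1 - γ) ^ Fintype.card n ≤ ‖(1 - E).det‖ := by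
    refine closure_minimal ?_ hclosed hE
    rintro _ ⟨i, j, hij, rfl⟩
    exact pow_card_le_norm_det_one_sub hγ.le (hspec i (j - i) (Nat.le_sub_of_add_le' hij))
  have det_eq_zero : (1 - E).det = 0 := by
    simpa only [Matrix.isUnit_iff_isUnit_det, isUnit_iff_ne_zero, ne_eq, not_not] using
      not_isUnit_one_sub_of_isIdempotentElem hidem hE₀
  rw [det_eq_zero, norm_zero] at le_norm_det
  exact (pow_pos (sub_pos.2 hγ) _).not_ge le_norm_det

variable [TopologicalSpace I] {Λ : Set (ℕ → I)}

theorem tendsto_switchedProd_of_spectrum {d : ℕ} {S : I → Matrix (Fin d) (Fin d) ℂ}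
    (hS : Continuous S) (hΛ : IsCompact Λ) (hinv : ShiftInv Λ)
    (hone : ∀ x m, ∀ z ∈ spectrum ℂ (switchedProd S x m), ‖z‖ ≤ 1) (hγ : γ < 1)
    (hspec : ∀ x ∈ Λ, ∀ m ≥ N, ∀ z ∈ spectrum ℂ (switchedProd S x m), ‖z‖ ≤ γ) :
    ∀ x ∈ Λ, Tendsto (switchedProd S x) atTop (𝓝 0) := by
  induction d using Nat.strong_induction_on with
  | _ d ih =>
  intro x hx
  by_cases hirr : IsIrreducibleSet (Set.range S)
  · have : Nonempty I := ⟨x 0⟩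
    obtain ⟨c, hc⟩ := exists_norm_le_of_norm_trace_le hirr.span_closure_eq_top fun M hM => by
      obtain ⟨y, m, rfl⟩ := exists_switchedProd_eq_of_mem_closure S hM
      exact norm_trace_le_of_spectrum (hone y m)
    exact tendsto_switchedProd_of_norm_le (fun i m => hc _ (switchedProd_mem_closure S _ m)) hγ
      fun i => hspec _ (hinv.add_mem hx i)
  · simp only [IsIrreducibleSet, not_forall, not_or, Set.forall_mem_range] at hirr
    obtain ⟨p, hp, hbot, htop⟩ := hirr
    obtain ⟨a, ha, b, hb, e, he⟩ := exists_algEquiv_toBlocks₂₁_eq_zero hbot htop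
    rw [Fintype.card_fin] at ha hb
    have he' (i : I) : (e (S i)).toBlocks₂₁ = 0 := he (S i) (hp i)
    have heS : Continuous fun i => e (S i) :=
      (LinearMap.continuous_of_finiteDimensional e.toLinearMap).comp hS
    simp only [spectrum_switchedProd_of_toBlocks₂₁_eq_zero e he', Set.mem_union, or_imp,
      forall_and] at hone hspec
    exact tendsto_switchedProd_of_toBlocks₂₁_eq_zero hΛ hinv e heS he'
      (ih a ha (heS.matrix_submatrix _ _) hone.1 hspec.1)
      (ih b hb (heS.matrix_submatrix _ _) hone.2 hspec.2) x hx

end SpectralCriterion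

section SpectralRadius

theorem norm_one_matrix_le_one {𝕜 n : Type*} [RCLike 𝕜] [Fintype n] [DecidableEq n] :
    ‖(1 : Matrix n n 𝕜)‖ ≤ 1 := by
  rw [Matrix.cstar_norm_def, map_one]
  exact ContinuousLinearMap.norm_id_le

theorem spectralRadius_matrix_le_nnnorm {n : Type*} [Fintype n] [DecidableEq n]
    (A : Matrix n n ℂ) : spectralRadius ℂ A ≤ ‖A‖₊ := by
  cases isEmpty_or_nonempty n
  · rw [spectrum.SpectralRadius.of_subsingleton]
    exact zero_le
  · exact spectrum.spectralRadius_le_nnnorm A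

theorem spectralRadius_matrix_ne_top {n : Type*} [Fintype n] [DecidableEq n] (A : Matrix n n ℂ) :
    spectralRadius ℂ A ≠ ⊤ :=
  ne_top_of_le_ne_top ENNReal.coe_ne_top (spectralRadius_matrix_le_nnnorm A)

variable {d : ℕ} (A : Matrix (Fin d) (Fin d) ℂ)

theorem specRad_nonneg : 0 ≤ specRad A :=
  ENNReal.toReal_nonneg

theorem specRad_le_norm : specRad A ≤ ‖A‖ :=
  ENNReal.toReal_mono ENNReal.coe_ne_top (spectralRadius_matrix_le_nnnorm A)

theorem norm_le_specRad_of_mem_spectrum {z : ℂ} (hz : z ∈ spectrum ℂ A) : ‖z‖ ≤ specRad A :=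
  ENNReal.toReal_mono (spectralRadius_matrix_ne_top A)
    (le_iSup₂ (f := fun k (_ : k ∈ spectrum ℂ A) => (‖k‖₊ : ENNReal)) z hz)

theorem specRad_pow_le_specRad_pow {k : ℕ} (hk : k ≠ 0) : specRad A ^ k ≤ specRad (A ^ k) := by
  rw [specRad, specRad, ← ENNReal.toReal_pow]
  exact ENNReal.toReal_mono (spectralRadius_matrix_ne_top _) (spectrum.spectralRadius_pow_le A k hk)

end SpectralRadius

section GeneralizedSpectralRadius

variable {d : ℕ} {I : Type*}

/-- The normalized spectral radius `ρ(S_{i_n} ⋯ S_{i_1})^{1/n}`, whose supremum over `Λ` has upper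
limit `gsr S Λ`. Since `1 / 0 = 0`, it equals `1` for `n = 0`. -/
noncomputable def rootSpecRad (S : I → Matrix (Fin d) (Fin d) ℂ) (x : ℕ → I) (n : ℕ) : ℝ :=
  specRad (prodS S x n) ^ (1 / (n : ℝ))

variable {S : I → Matrix (Fin d) (Fin d) ℂ} {Λ : Set (ℕ → I)} {C : ℝ}

theorem rootSpecRad_nonneg (x : ℕ → I) (n : ℕ) : 0 ≤ rootSpecRad S x n :=
  Real.rpow_nonneg (specRad_nonneg _) _

theorem rootSpecRad_pow (x : ℕ → I) {n : ℕ} (hn : n ≠ 0) :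
    rootSpecRad S x n ^ n = specRad (prodS S x n) := by
  rw [rootSpecRad, one_div, Real.rpow_inv_natCast_pow (specRad_nonneg _) hn]

theorem rootSpecRad_le_iff {x : ℕ → I} {n : ℕ} (hn : n ≠ 0) {r : ℝ} (hr : 0 ≤ r) :
    rootSpecRad S x n ≤ r ↔ specRad (prodS S x n) ≤ r ^ n := by
  rw [← rootSpecRad_pow x hn, pow_le_pow_iff_left₀ (rootSpecRad_nonneg x n) hr hn]

theorem rootSpecRad_le_of_norm_le (hC₁ : 1 ≤ C) {x : ℕ → I} (hC : ∀ k, ‖S (x k)‖ ≤ C) (n : ℕ) :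
    rootSpecRad S x n ≤ C := by
  rcases eq_or_ne n 0 with rfl | hn
  · simpa [rootSpecRad] using hC₁
  rw [rootSpecRad_le_iff hn (zero_le_one.trans hC₁), prodS_eq_switchedProd]
  exact (specRad_le_norm _).trans (norm_switchedProd_le_pow norm_one_matrix_le_one hC n)

theorem bddAbove_range_rootSpecRad (hC₁ : 1 ≤ C) (hC : ∀ x ∈ Λ, ∀ k, ‖S (x k)‖ ≤ C) (n : ℕ) :
    BddAbove (Set.range fun x : Λ => rootSpecRad S x n) :=
  ⟨C, Set.forall_mem_range.2 fun x => rootSpecRad_le_of_norm_le hC₁ (hC x x.2) n⟩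

theorem isBoundedUnder_iSup_rootSpecRad (hC₁ : 1 ≤ C) (hC : ∀ x ∈ Λ, ∀ k, ‖S (x k)‖ ≤ C) :
    IsBoundedUnder (· ≤ ·) atTop fun n => ⨆ x : Λ, rootSpecRad S x n :=
  isBoundedUnder_of ⟨C, fun n => Real.iSup_le
    (fun x => rootSpecRad_le_of_norm_le hC₁ (hC x x.2) n) (zero_le_one.trans hC₁)⟩

theorem rootSpecRad_le_rootSpecRad_mod (x : ℕ → I) {m k : ℕ} (hm : m ≠ 0) (hk : k ≠ 0) :
    rootSpecRad S x m ≤ rootSpecRad S (fun j => x (j % m)) (m * k) := by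
  rw [rootSpecRad_le_iff hm (rootSpecRad_nonneg _ _)]
  refine (pow_le_pow_iff_left₀ (specRad_nonneg _) (pow_nonneg (rootSpecRad_nonneg _ _) _) hk).1 ?_
  rw [← pow_mul, rootSpecRad_pow _ (mul_ne_zero hm hk), prodS_eq_switchedProd,
    prodS_eq_switchedProd, switchedProd_mod_mul]
  exact specRad_pow_le_specRad_pow _ hk

theorem rootSpecRad_le_gsr_univ (hbdd : ∃ C, ∀ i, ‖S i‖ ≤ C) (x : ℕ → I) {m : ℕ} (hm : m ≠ 0) :
    rootSpecRad S x m ≤ gsr S Set.univ := by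
  obtain ⟨C, hC⟩ := hbdd
  have hC' : ∀ y ∈ (Set.univ : Set (ℕ → I)), ∀ k, ‖S (y k)‖ ≤ max 1 C := fun y _ k =>
    (hC (y k)).trans (le_max_right 1 C)
  refine le_limsup_of_frequently_le (frequently_atTop.2 fun a => ?_)
    (isBoundedUnder_iSup_rootSpecRad (le_max_left 1 C) hC')
  refine ⟨m * (a + 1), a.le_succ.trans (Nat.le_mul_of_pos_left _ (Nat.pos_of_ne_zero hm)), ?_⟩
  exact (rootSpecRad_le_rootSpecRad_mod x hm a.succ_ne_zero).trans <|
    le_ciSup (bddAbove_range_rootSpecRad (le_max_left 1 C) hC' _) ⟨_, Set.mem_univ _⟩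

theorem specRad_prodS_le_one_of_gsr_univ_le_one (hbdd : ∃ C, ∀ i, ‖S i‖ ≤ C)
    (hgsr : gsr S Set.univ ≤ 1) (x : ℕ → I) (m : ℕ) : specRad (prodS S x m) ≤ 1 := by
  rcases eq_or_ne m 0 with rfl | hm
  · exact (specRad_le_norm 1).trans norm_one_matrix_le_one
  rw [← one_pow m, ← rootSpecRad_le_iff hm zero_le_one]
  exact (rootSpecRad_le_gsr_univ hbdd x hm).trans hgsr

theorem gsr_le_of_norm_switchedProd_le_geometric (hne : Λ.Nonempty) {B r : ℝ} (hB : 0 < B)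
    (hr : 0 ≤ r) (hle : ∀ x ∈ Λ, ∀ m, ‖switchedProd S x m‖ ≤ B * r ^ m) : gsr S Λ ≤ r := by
  have : Nonempty Λ := hne.to_subtype
  have hroot : Tendsto (fun n : ℕ => B ^ (1 / (n : ℝ)) * r) atTop (𝓝 r) := by
    have hpow : Tendsto (fun n : ℕ => B ^ (1 / (n : ℝ))) atTop (𝓝 1) :=
      ((Real.continuous_const_rpow hB.ne').tendsto' 0 1 (Real.rpow_zero B)).comp
        tendsto_one_div_atTop_nhds_zero_nat
    simpa only [one_mul] using hpow.mul_const r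
  have iSup_le {n : ℕ} (hn : n ≠ 0) : ⨆ x : Λ, rootSpecRad S x n ≤ B ^ (1 / (n : ℝ)) * r := by
    refine ciSup_le fun x => (rootSpecRad_le_iff hn (by positivity)).2 ?_
    rw [mul_pow, one_div, Real.rpow_inv_natCast_pow hB.le hn, prodS_eq_switchedProd]
    exact (specRad_le_norm _).trans (hle x x.2 n)
  calc gsr S Λ ≤ limsup (fun n : ℕ => B ^ (1 / (n : ℝ)) * r) atTop :=
        limsup_le_limsup ((eventually_ne_atTop 0).mono fun n => iSup_le)
          (isCoboundedUnder_le_of_le atTop fun n => Real.iSup_nonneg fun x : Λ =>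
            rootSpecRad_nonneg x.1 n) hroot.isBoundedUnder_le
    _ = r := hroot.limsup_eq

variable [TopologicalSpace I]

theorem gsr_lt_one_of_tendsto_prodS (hS : Continuous S) (hne : Λ.Nonempty) (hΛ : IsCompact Λ)
    (hinv : ShiftInv Λ) (hlim : ∀ x ∈ Λ, Tendsto (prodS S x) atTop (𝓝 0)) : gsr S Λ < 1 := by
  simp only [prodS_eq_switchedProd] at hlim
  obtain ⟨B, r, hB, hr₀, hr₁, hle⟩ := exists_norm_switchedProd_le_geometric hS hΛ hinv hlim
  exact (gsr_le_of_norm_switchedProd_le_geometric hne hB hr₀.le hle).trans_lt hr₁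

theorem exists_specRad_prodS_le_of_gsr_lt_one (hS : Continuous S) (hΛ : IsCompact Λ)
    (hinv : ShiftInv Λ) (hgsr : gsr S Λ < 1) :
    ∃ γ : ℝ, 0 < γ ∧ γ < 1 ∧ ∃ N : ℕ, 1 ≤ N ∧
      ∀ n : ℕ, N ≤ n → ∀ x ∈ Λ, specRad (prodS S x n) ≤ γ := by
  obtain ⟨γ, hγ, hγ₁⟩ := exists_between (max_lt hgsr one_pos)
  obtain ⟨hγ_gsr, hγ₀⟩ := max_lt_iff.1 hγ
  obtain ⟨C, hC⟩ := hinv.exists_norm_apply_le hS hΛ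
  have hC' : ∀ x ∈ Λ, ∀ k, ‖S (x k)‖ ≤ max 1 C := fun x hx k =>
    (hC x hx k).trans (le_max_right 1 C)
  obtain ⟨N, hN⟩ := eventually_atTop.1 <|
    eventually_lt_of_limsup_lt hγ_gsr (isBoundedUnder_iSup_rootSpecRad (le_max_left 1 C) hC')
  refine ⟨γ, hγ₀, hγ₁, N + 1, N.succ_pos, fun n hn x hx => ?_⟩
  have hn₀ : n ≠ 0 := Nat.ne_zero_of_lt hn
  have hroot : rootSpecRad S x n ≤ γ :=
    (le_ciSup (bddAbove_range_rootSpecRad (le_max_left 1 C) hC' n) ⟨x, hx⟩).trans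
      (hN n (Nat.le_of_succ_le hn)).le
  exact ((rootSpecRad_le_iff hn₀ hγ₀.le).1 hroot).trans (pow_le_of_le_one hγ₀.le hγ₁.le hn₀)

theorem tendsto_prodS_of_specRad_le (hS : Continuous S) (hbdd : ∃ C, ∀ i, ‖S i‖ ≤ C)
    (hgsr : gsr S Set.univ ≤ 1) (hΛ : IsCompact Λ) (hinv : ShiftInv Λ) {γ : ℝ} (hγ : γ < 1) {N : ℕ}
    (hspec : ∀ n, N ≤ n → ∀ x ∈ Λ, specRad (prodS S x n) ≤ γ) :
    ∀ x ∈ Λ, Tendsto (prodS S x) atTop (𝓝 0) := by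
  have hone := specRad_prodS_le_one_of_gsr_univ_le_one hbdd hgsr
  simp only [prodS_eq_switchedProd] at hone hspec ⊢
  exact tendsto_switchedProd_of_spectrum hS hΛ hinv
    (fun x m z hz => (norm_le_specRad_of_mem_spectrum _ hz).trans (hone x m)) hγ
    fun x hx m hm z hz => (norm_le_specRad_of_mem_spectrum _ hz).trans (hspec m hm x hx)

end GeneralizedSpectralRadius

end L2OperatorNorm

theorem theoremB_general {d : ℕ} {I : Type*} [TopologicalSpace I]
    (S : I → Matrix (Fin d) (Fin d) ℂ) (hS : Continuous S)
    (hbdd : ∃ C : ℝ, ∀ i : I, opNorm (S i) ≤ C) (hgsr : gsr S (Set.univ : Set (ℕ → I)) ≤ 1)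
    (Λ : Set (ℕ → I)) (hne : Λ.Nonempty) (hcomp : IsCompact Λ) (hinv : ShiftInv Λ) :
    ((∀ x ∈ Λ, Filter.Tendsto (fun n : ℕ => prodS S x n) Filter.atTop (nhds 0)) ↔
        gsr S Λ < 1) ∧
      (gsr S Λ < 1 ↔
        ∃ γ : ℝ, 0 < γ ∧ γ < 1 ∧ ∃ N : ℕ, 1 ≤ N ∧
          ∀ n : ℕ, N ≤ n → ∀ x ∈ Λ, specRad (prodS S x n) ≤ γ) := by
  have stable_imp_gsr_lt := gsr_lt_one_of_tendsto_prodS hS hne hcomp hinv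
  have gsr_lt_imp_specRad_le := exists_specRad_prodS_le_of_gsr_lt_one hS hcomp hinv
  have specRad_le_imp_stable : (∃ γ : ℝ, 0 < γ ∧ γ < 1 ∧ ∃ N : ℕ, 1 ≤ N ∧
      ∀ n : ℕ, N ≤ n → ∀ x ∈ Λ, specRad (prodS S x n) ≤ γ) →
      ∀ x ∈ Λ, Tendsto (prodS S x) atTop (𝓝 0) := by
    rintro ⟨γ, -, hγ, N, -, hspec⟩
    exact tendsto_prodS_of_specRad_le hS hbdd hgsr hcomp hinv hγ hspec
  exact ⟨⟨stable_imp_gsr_lt, specRad_le_imp_stable ∘ gsr_lt_imp_specRad_le⟩,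
    ⟨gsr_lt_imp_specRad_le, stable_imp_gsr_lt ∘ specRad_le_imp_stable⟩⟩

/-- **Theorem B.** Criteria for absolute asymptotic stability under switching constraints. -/
theorem theoremB {d : ℕ} (hd : 1 ≤ d) {I : Type*} [MetricSpace I]
    (S : I → Matrix (Fin d) (Fin d) ℂ) (hS : Continuous S)
    (hbdd : ∃ C : ℝ, ∀ i : I, opNorm (S i) ≤ C)
    (hgsr : gsr S (Set.univ : Set (ℕ → I)) = 1)
    (Λ : Set (ℕ → I)) (hne : Λ.Nonempty) (hcomp : IsCompact Λ) (hinv : ShiftInv Λ) :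
    ((∀ x ∈ Λ, Filter.Tendsto (fun n : ℕ => prodS S x n) Filter.atTop (nhds 0)) ↔
        gsr S Λ < 1) ∧
      (gsr S Λ < 1 ↔
        ∃ γ : ℝ, 0 < γ ∧ γ < 1 ∧ ∃ N : ℕ, 1 ≤ N ∧
          ∀ n : ℕ, N ≤ n → ∀ x ∈ Λ, specRad (prodS S x n) ≤ γ) := by
  exact theoremB_general S hS hbdd hgsr.le Λ hne hcomp hinv
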